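/- arXiv:2511.08926 — 2 statements merged into one kernel-verified Lean document; each statement's English description precedes it below -/
import Mathlib

section
/- Let N ≥ 1 and k ≥ 1. For each agent i ∈ Fin N, let O i and X i be nonempty compact metric spaces equipped with their Borel σ-algebras, let μ be a Borel probability measure on the product space Π i, O i (the common prior over observation profiles), let w i ∈ stdSimplex ℝ (Fin k) be a fixed preference vector (commonly observed by all agents), and let f i : (Π j, X j) → (Fin k → ℝ) be continuous (the vectorised reward of agent i). For a profile κ of behavioral strategies (κ j a Markov kernel from O j to X j for each j), define the ex-ante payoff of agent i as J i κ = ∫ o, (∫ x, (∑ m, w i m * f i x m) ∂(Measure.pi (fun j => κ j (o j)))) ∂μ. Then a Bayesian Nash equilibrium exists: there is a profile κ* of Markov kernels such that for every agent i and every Markov kernel τ from O i to X i, J i (Function.update κ* i τ) ≤ J i κ*. -/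
open MeasureTheory ProbabilityTheory

/-!
The payoffs do not depend on the observations. Hence it is enough to let every agent play its part
of a mixed Nash equilibrium of the complete-information game, whatever it observes: at each
observation profile, a deviating kernel is then just a mixed deviation from that equilibrium.

A mixed equilibrium is a profile `ν` at which the Nikaido–Isoda function (the total gain from
deviating to a pure profile `q`) is nonpositive for all `q`. By weak compactness of the spaces of
probability measures it suffices to treat finitely many `q`, and restricting `ν` to mixtures of
these turns the problem into a variational inequality on a simplex. The latter follows from the dual
KKM covering theorem: closed sets `F i` that cover the simplex and contain its faces `x i = 0` have
a common point. In place of triangulations, the covering theorem is derived from Scarf's lemma on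
dominant sets of a finite set with several orders, applied to the coordinates of a fine net.
-/

section Finset

variable {α β : Type*} [DecidableEq α] [DecidableEq β]

lemma image_erase_eq_image_iff {s : Finset α} {f : α → β} {a : α} (ha : a ∈ s) :
    (s.erase a).image f = s.image f ↔ ∃ b ∈ s, b ≠ a ∧ f b = f a := by
  constructor
  · intro h
    obtain ⟨b, hb, hba⟩ := Finset.mem_image.mp (h ▸ Finset.mem_image_of_mem f ha)
    exact ⟨b, Finset.mem_of_mem_erase hb, Finset.ne_of_mem_erase hb, hba⟩
  · rintro ⟨b, hb, hba, hf⟩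
    conv_rhs => rw [← Finset.insert_erase ha, Finset.image_insert]
    exact (Finset.insert_eq_of_mem <|
      Finset.mem_image.mpr ⟨b, Finset.mem_erase.mpr ⟨hba, hb⟩, hf⟩).symm

lemma card_filter_image_erase_eq_image {s : Finset α} {f : α → β}
    (h : (s.image f).card + 1 = s.card) :
    (s.filter fun a ↦ (s.erase a).image f = s.image f).card = 2 := by
  obtain ⟨a, ha, b, hb, hab, hf⟩ := Finset.exists_ne_map_eq_of_card_lt_of_maps_to
    (by omega : (s.image f).card < s.card) fun a ↦ Finset.mem_image_of_mem f
  have hinj : Set.InjOn f (s.erase a) := by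
    rw [← Finset.card_image_iff, (image_erase_eq_image_iff ha).mpr ⟨b, hb, hab.symm, hf.symm⟩,
      Finset.card_erase_of_mem ha]
    omega
  refine Finset.card_eq_two.mpr ⟨a, b, hab, Finset.ext fun y ↦ ?_⟩
  rw [Finset.mem_filter, Finset.mem_insert, Finset.mem_singleton]
  constructor
  · rintro ⟨hy, hy_image⟩
    obtain ⟨z, hz, hzy, hfz⟩ := (image_erase_eq_image_iff hy).mp hy_image
    by_contra! hne
    have hy' : y ∈ (s.erase a : Set α) := by simp [hy, hne.1]
    by_cases hza : z = a
    · exact hne.2 (hinj hy' (by simp [hb, hab.symm]) (by rw [← hfz, hza, hf]))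
    · exact hzy (hinj (by simp [hz, hza]) hy' hfz)
  · rintro (rfl | rfl)
    · exact ⟨ha, (image_erase_eq_image_iff ha).mpr ⟨b, hb, hab.symm, hf.symm⟩⟩
    · exact ⟨hb, (image_erase_eq_image_iff hb).mpr ⟨a, ha, hab, hf⟩⟩

lemma sum_card_filter_insert_mem [Fintype α] (𝒜 ℬ : Finset (Finset α)) :
    ∑ S ∈ 𝒜, (Finset.univ.filter fun y ↦ y ∉ S ∧ insert y S ∈ ℬ).card =
      ∑ R ∈ ℬ, (R.filter fun y ↦ R.erase y ∈ 𝒜).card := by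
  rw [← Finset.card_sigma, ← Finset.card_sigma]
  refine Finset.card_nbij' (fun p ↦ ⟨insert p.2 p.1, p.2⟩) (fun p ↦ ⟨p.1.erase p.2, p.2⟩)
    ?_ ?_ ?_ ?_ <;> rintro ⟨S, y⟩ h <;> simp_all

end Finset

/-- A finite set `S` is *dominant* for the criteria `r i` if every point is bounded, for at least
one criterion, by all of `S`. The dominant sets with as many elements as there are criteria are
Scarf's primitive sets. -/
def IsDominantSet {ι V α : Type*} [LE α] (r : ι → V → α) (S : Finset V) : Prop :=
  ∀ y, ∃ i, ∀ s ∈ S, r i y ≤ r i s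

/-- Scarf's slack points: `e i` is a minimum of the `i`-th criterion, and under every other
criterion it beats all points that are not slack. -/
structure IsSlackFamily {ι V α : Type*} [Preorder α] (r : ι → V → α) (e : ι → V) : Prop where
  apply_le : ∀ i v, r i (e i) ≤ r i v
  lt_apply : ∀ i j, i ≠ j → ∀ v ∉ Set.range e, r i v < r i (e j)

/-- A choice, for each criterion `r i`, of a minimiser `m i` on `S`. -/
structure IsMinSelection {ι V α : Type*} [LE α] (r : ι → V → α) (S : Finset V) (m : ι → V) :
    Prop where
  mem : ∀ i, m i ∈ S
  le : ∀ i, ∀ s ∈ S, r i (m i) ≤ r i s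

section Scarf

variable {ι V α : Type*} [LinearOrder α] {r : ι → V → α} {S : Finset V} {e m : ι → V} {y : V}

lemma IsDominantSet.mono {S' : Finset V} (h : S ⊆ S') (hS' : IsDominantSet r S') :
    IsDominantSet r S := fun y ↦
  (hS' y).imp fun _ hi s hs ↦ hi s (h hs)

lemma exists_isMinSelection (r : ι → V → α) (hS : S.Nonempty) : ∃ m, IsMinSelection r S m := by
  choose m hmem hle using fun i ↦ S.exists_min_image (r i) hS
  exact ⟨m, hmem, hle⟩

lemma IsMinSelection.eq_of_forall_le (hm : IsMinSelection r S m) {i : ι}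
    (hr : (r i).Injective) (hy : y ∈ S) (hle : ∀ s ∈ S, r i y ≤ r i s) : m i = y :=
  hr <| (hm.le i y hy).antisymm (hle _ (hm.mem i))

lemma IsMinSelection.image_eq [Fintype ι] [DecidableEq V] (hm : IsMinSelection r S m)
    (hr : ∀ i, (r i).Injective) (hS : IsDominantSet r S) : Finset.univ.image m = S := by
  refine (Finset.image_subset_iff.mpr fun i _ ↦ hm.mem i).antisymm fun x hx ↦ ?_
  obtain ⟨i, hi⟩ := hS x
  exact Finset.mem_image.mpr ⟨i, Finset.mem_univ i, hm.eq_of_forall_le (hr i) hx hi⟩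

/-- The points that beat the reference point `m i` under every criterion `i ≠ k`. When `m` selects
minimisers on `S`, these are the points whose insertion into `S` can only change the minimiser for
the criterion `k`. -/
def strictlyAboveExcept (r : ι → V → α) (m : ι → V) (k : ι) : Set V :=
  {y | ∀ i ≠ k, r i (m i) < r i y}

lemma IsDominantSet.eq_of_mem_strictlyAboveExcept (hS : IsDominantSet r S)
    (hm : IsMinSelection r S m) {k l : ι} (hk : y ∈ strictlyAboveExcept r m k)
    (hl : y ∈ strictlyAboveExcept r m l) : k = l := by
  obtain ⟨i, hi⟩ := hS y
  have eq_of_mem : ∀ j, y ∈ strictlyAboveExcept r m j → i = j := fun j hj ↦ by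
    by_contra hij
    exact (hi _ (hm.mem i)).not_gt (hj i hij)
  rw [← eq_of_mem k hk, eq_of_mem l hl]

lemma IsSlackFamily.mem_strictlyAboveExcept (he : IsSlackFamily r e) (hm : IsMinSelection r S m)
    {v : V} (hv : v ∈ S) (hve : v ∉ Set.range e) (k : ι) : e k ∈ strictlyAboveExcept r m k :=
  fun i hik ↦ (hm.le i v hv).trans_lt (he.lt_apply i k hik v hve)

variable [DecidableEq V]

lemma IsDominantSet.insert_of_isMaxOn (hS : IsDominantSet r S) (hm : IsMinSelection r S m)
    {k : ι} (hy : y ∈ strictlyAboveExcept r m k)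
    (hmax : IsMaxOn (r k) (strictlyAboveExcept r m k) y) : IsDominantSet r (insert y S) := by
  intro z
  by_cases hz : z ∈ strictlyAboveExcept r m k
  · obtain ⟨j, hj⟩ := hS z
    obtain rfl : j = k := by
      by_contra hjk
      exact (hj _ (hm.mem j)).not_gt (hz j hjk)
    exact ⟨j, Finset.forall_mem_insert _ _ _ |>.mpr ⟨hmax hz, hj⟩⟩
  · obtain ⟨i, hik, hi⟩ : ∃ i ≠ k, r i z ≤ r i (m i) := by
      simpa [strictlyAboveExcept] using hz
    exact ⟨i, Finset.forall_mem_insert _ _ _ |>.mpr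
      ⟨hi.trans (hy i hik).le, fun s hs ↦ hi.trans (hm.le i s hs)⟩⟩

lemma isMaxOn_of_isDominantSet_insert (hm : IsMinSelection r S m) {k : ι}
    (hy : y ∈ strictlyAboveExcept r m k) (hS : IsDominantSet r (insert y S)) :
    IsMaxOn (r k) (strictlyAboveExcept r m k) y := by
  intro z hz
  obtain ⟨i, hi⟩ := hS z
  obtain rfl : i = k := by
    by_contra hik
    exact (hi _ (Finset.mem_insert_of_mem (hm.mem i))).not_gt (hz i hik)
  exact hi y (Finset.mem_insert_self y S)

/-- The points whose insertion into `S` yields a dominant set. -/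
noncomputable def completions [Fintype V] (r : ι → V → α) (S : Finset V) : Finset V :=
  open scoped Classical in Finset.univ.filter fun y ↦ y ∉ S ∧ IsDominantSet r (insert y S)

lemma mem_completions [Fintype V] :
    y ∈ completions r S ↔ y ∉ S ∧ IsDominantSet r (insert y S) := by
  simp [completions]

lemma completions_eq_empty [Fintype V] (hS : ¬ IsDominantSet r S) : completions r S = ∅ :=
  Finset.eq_empty_of_forall_notMem fun y hy ↦
    hS ((mem_completions.mp hy).2.mono (Finset.subset_insert y S))

variable [Fintype ι]

lemma notMem_of_mem_strictlyAboveExcept [DecidableEq ι] {k : ι}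
    (hk : (Finset.univ.erase k).image m = S) (hy : y ∈ strictlyAboveExcept r m k) : y ∉ S := by
  rintro hyS
  obtain ⟨i, hi, rfl⟩ := Finset.mem_image.mp (hk ▸ hyS)
  exact (hy i (Finset.ne_of_mem_erase hi)).false

lemma exists_mem_strictlyAboveExcept [DecidableEq ι] (hr : ∀ i, (r i).Injective)
    (hm : IsMinSelection r S m) (hcard : S.card + 1 = Fintype.card ι) (hyS : y ∉ S)
    (hS : IsDominantSet r (insert y S)) :
    ∃ k, (Finset.univ.erase k).image m = S ∧ y ∈ strictlyAboveExcept r m k := by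
  obtain ⟨m', hm'⟩ := exists_isMinSelection r (Finset.insert_nonempty y S)
  have himage := hm'.image_eq hr hS
  have hinj : m'.Injective := by
    rw [← Finset.card_univ, ← Finset.card_insert_of_notMem hyS, ← himage] at hcard
    exact Set.injOn_univ.mp (by simpa using Finset.card_image_iff.mp hcard)
  obtain ⟨k, -, hk⟩ := Finset.mem_image.mp (himage ▸ Finset.mem_insert_self y S)
  have heq : ∀ i ≠ k, m' i = m i := fun i hik ↦ by
    have hmem : m' i ∈ S :=
      Finset.mem_of_mem_insert_of_ne (hm'.mem i) fun h ↦ hik (hinj (h.trans hk.symm))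
    exact (hm.eq_of_forall_le (hr i) hmem
      fun s hs ↦ hm'.le i s (Finset.mem_insert_of_mem hs)).symm
  refine ⟨k, (Finset.image_subset_iff.mpr fun i _ ↦ hm.mem i).antisymm fun x hx ↦ ?_,
    fun i hik ↦ ?_⟩
  · obtain ⟨i, -, rfl⟩ := Finset.mem_image.mp (himage ▸ Finset.mem_insert_of_mem hx)
    have hik : i ≠ k := fun h ↦ hyS (by rwa [← hk, ← h])
    exact Finset.mem_image.mpr ⟨i, by simp [hik], (heq i hik).symm⟩
  · refine lt_of_le_of_ne (heq i hik ▸ hm'.le i y (Finset.mem_insert_self y S)) fun h ↦ ?_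
    exact hyS (hr i h ▸ hm.mem i)

variable [Fintype V]

lemma IsSlackFamily.card_completions_eq_two (he : IsSlackFamily r e)
    (hr : ∀ i, (r i).Injective) (hS : IsDominantSet r S) (hcard : S.card + 1 = Fintype.card ι)
    {v : V} (hv : v ∈ S) (hve : v ∉ Set.range e) : (completions r S).card = 2 := by
  classical
  obtain ⟨m, hm⟩ := exists_isMinSelection r ⟨v, hv⟩
  have himage := hm.image_eq hr hS
  choose best hbest_mem hbest_max using fun k ↦
    Set.exists_max_image _ (r k) (Set.toFinite (strictlyAboveExcept r m k))
      ⟨e k, he.mem_strictlyAboveExcept hm hv hve k⟩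
  rw [← card_filter_image_erase_eq_image (s := Finset.univ) (f := m)
    (by rwa [himage, Finset.card_univ]), himage]
  refine (Finset.card_bij (fun k _ ↦ best k) (fun k hk ↦ ?_) (fun k _ l _ hkl ↦ ?_)
    fun y hy ↦ ?_).symm
  · exact mem_completions.mpr
      ⟨notMem_of_mem_strictlyAboveExcept (Finset.mem_filter.mp hk).2 (hbest_mem k),
        hS.insert_of_isMaxOn hm (hbest_mem k) (hbest_max k)⟩
  · exact hS.eq_of_mem_strictlyAboveExcept hm (hbest_mem k) (hkl ▸ hbest_mem l)
  · obtain ⟨hyS, hdom⟩ := mem_completions.mp hy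
    obtain ⟨k, hk, hyk⟩ := exists_mem_strictlyAboveExcept hr hm hcard hyS hdom
    refine ⟨k, by simp [hk], hr k (le_antisymm ?_ (hbest_max k y hyk))⟩
    exact isMaxOn_of_isDominantSet_insert hm hyk hdom (hbest_mem k)

variable [DecidableEq ι]

lemma IsSlackFamily.card_completions_image_erase (he : IsSlackFamily r e)
    (hr : ∀ i, (r i).Injective) (he_inj : e.Injective) (k : ι) :
    (completions r ((Finset.univ.erase k).image e)).card = 1 := by
  set S := (Finset.univ.erase k).image e with hS
  have mem_S : ∀ j ≠ k, e j ∈ S := fun j hj ↦ Finset.mem_image_of_mem e (by simp [hj])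
  have hkS : e k ∉ S := by simp [hS, he_inj.eq_iff]
  obtain ⟨top, htop, hmax⟩ := Finset.exists_max_image Sᶜ (r k) ⟨e k, Finset.mem_compl.mpr hkS⟩
  simp only [Finset.mem_compl] at htop hmax
  refine Finset.card_eq_one.mpr ⟨top, Finset.ext fun z ↦ ?_⟩
  rw [mem_completions, Finset.mem_singleton]
  constructor
  · rintro ⟨hz, hdom⟩
    obtain ⟨i, hi⟩ := hdom top
    obtain rfl : i = k := by
      by_contra hik
      have htop_eq : top = e i :=
        hr i ((hi _ (Finset.mem_insert_of_mem (mem_S i hik))).antisymm (he.apply_le i top))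
      exact htop (htop_eq ▸ mem_S i hik)
    exact hr i ((hmax z hz).antisymm (hi z (Finset.mem_insert_self z S)))
  · rintro rfl
    refine ⟨htop, fun x ↦ ?_⟩
    by_cases hxe : x ∈ Set.range e
    · obtain ⟨j, rfl⟩ := hxe
      exact ⟨j, fun s _ ↦ he.apply_le j s⟩
    · have hxS : x ∉ S := fun hx ↦ hxe <| by
        obtain ⟨j, -, rfl⟩ := Finset.mem_image.mp hx
        exact ⟨j, rfl⟩
      refine ⟨k, Finset.forall_mem_insert _ _ _ |>.mpr ⟨hmax x hxS, ?_⟩⟩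
      simp only [hS, Finset.forall_mem_image, Finset.mem_erase]
      exact fun j hj ↦ (he.lt_apply k j hj.1.symm x hxe).le

/-- The sets with exactly one point of every colour except `i₀`, and none of colour `i₀`. They are
the doors of the parity argument, whose rooms are the dominant sets with one point more. -/
def doors (c : V → ι) (i₀ : ι) : Finset (Finset V) :=
  Finset.univ.filter fun S ↦ S.card + 1 = Fintype.card ι ∧ S.image c = Finset.univ.erase i₀

lemma even_card_filter_erase_mem_doors (c : V → ι) (i₀ : ι) {R : Finset V}
    (hcard : R.card = Fintype.card ι) (hR : R.image c ≠ Finset.univ) :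
    Even (R.filter fun y ↦ R.erase y ∈ doors c i₀).card := by
  obtain hempty | ⟨x, hx⟩ := (R.filter fun y ↦ R.erase y ∈ doors c i₀).eq_empty_or_nonempty
  · simp [hempty]
  simp only [Finset.mem_filter, doors, Finset.mem_univ, true_and] at hx
  have himage : R.image c = Finset.univ.erase i₀ := by
    have hsub : Finset.univ.erase i₀ ⊆ R.image c :=
      hx.2.2 ▸ Finset.image_subset_image (Finset.erase_subset x R)
    refine (Finset.subset_erase.mpr ⟨Finset.subset_univ _, fun hi₀ ↦ hR ?_⟩).antisymm hsub
    rw [← Finset.insert_eq_of_mem hi₀]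
    grind
  have hfilter : (R.filter fun y ↦ R.erase y ∈ doors c i₀) =
      R.filter fun y ↦ (R.erase y).image c = R.image c := by
    refine Finset.filter_congr fun y hy ↦ ?_
    simp [doors, himage, Finset.card_erase_add_one hy, hcard]
  have htwo := card_filter_image_erase_eq_image (s := R) (f := c) (by
    rw [himage, Finset.card_erase_add_one (Finset.mem_univ i₀), Finset.card_univ, hcard])
  rw [hfilter, htwo]
  exact even_two

lemma image_erase_mem_doors {c : V → ι} (hc : ∀ i, c (e i) = i) (i₀ : ι) :
    (Finset.univ.erase i₀).image e ∈ doors c i₀ := by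
  have he : e.Injective := Function.LeftInverse.injective hc
  simp [doors, Finset.card_image_of_injective _ he, Finset.image_image,
    (funext hc : c ∘ e = id), Finset.card_erase_add_one, -Finset.card_erase_of_mem]

lemma eq_image_erase_of_mem_doors {c : V → ι} (hc : ∀ i, c (e i) = i) {i₀ : ι}
    (hS : S ∈ doors c i₀) (hSe : ∀ v ∈ S, v ∈ Set.range e) :
    S = (Finset.univ.erase i₀).image e := by
  have himage : S.image c = Finset.univ.erase i₀ := (Finset.mem_filter.mp hS).2.2
  have hec : Set.EqOn (e ∘ c) id S := fun v hv ↦ by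
    obtain ⟨j, rfl⟩ := hSe v hv
    simp [hc]
  rw [← himage, Finset.image_image, Finset.image_congr hec, Finset.image_id]

lemma IsSlackFamily.odd_sum_card_completions (he : IsSlackFamily r e)
    (hr : ∀ i, (r i).Injective) {c : V → ι} (hc : ∀ i, c (e i) = i) (i₀ : ι) :
    Odd (∑ S ∈ doors c i₀, (completions r S).card) := by
  rw [← Finset.add_sum_erase _ _ (image_erase_mem_doors hc i₀),
    he.card_completions_image_erase hr (Function.LeftInverse.injective hc)]
  refine odd_one.add_even (Finset.even_sum _ fun S hS ↦ ?_)
  obtain ⟨hne, hdoor⟩ := Finset.mem_erase.mp hS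
  by_cases hdom : IsDominantSet r S
  · obtain ⟨v, hv, hve⟩ : ∃ v ∈ S, v ∉ Set.range e := by
      by_contra! h
      exact hne (eq_image_erase_of_mem_doors hc hdoor h)
    rw [he.card_completions_eq_two hr hdom (Finset.mem_filter.mp hdoor).2.1 hv hve]
    exact even_two
  · simp [completions_eq_empty hdom]

end Scarf

section ScarfLemma

variable {ι V T α : Type*}

theorem IsSlackFamily.exists_isDominantSet_surjOn [Finite ι] [Nonempty ι] [Finite V]
    [LinearOrder α] {r : ι → V → α} {e : ι → V} (he : IsSlackFamily r e)
    (hr : ∀ i, (r i).Injective) {c : V → ι} (hc : ∀ i, c (e i) = i) :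
    ∃ R : Finset V, IsDominantSet r R ∧ Set.SurjOn c R Set.univ := by
  classical
  have := Fintype.ofFinite ι
  have := Fintype.ofFinite V
  by_contra! hno
  obtain ⟨i₀⟩ := ‹Nonempty ι›
  -- Count the pairs (door, room around it) in two ways: the doors contribute an odd number,
  -- whereas a room that misses a colour has either no door or two.
  let rooms : Finset (Finset V) :=
    Finset.univ.filter fun R ↦ R.card = Fintype.card ι ∧ IsDominantSet r R
  have hcompletions : ∀ S ∈ doors c i₀,
      completions r S = Finset.univ.filter fun y ↦ y ∉ S ∧ insert y S ∈ rooms := fun S hS ↦ by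
    ext y
    simp +contextual [mem_completions, rooms, ← (Finset.mem_filter.mp hS).2.1]
  have hodd := he.odd_sum_card_completions hr hc i₀
  rw [Finset.sum_congr rfl fun S hS ↦ congrArg Finset.card (hcompletions S hS),
    sum_card_filter_insert_mem, ← Nat.not_even_iff_odd] at hodd
  refine hodd (Finset.even_sum _ fun R hR ↦ ?_)
  obtain ⟨hcard, hdom⟩ := (Finset.mem_filter.mp hR).2
  refine even_card_filter_erase_mem_doors c i₀ hcard fun himage ↦ hno R hdom fun i _ ↦ ?_
  exact Finset.mem_image.mp (himage ▸ Finset.mem_univ i)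

/-- The criteria `r i` on `T`, extended to `T ⊕ ι` so that the added points `Sum.inr i` are slack:
`Sum.inr i` is the least point for criterion `i` and a greatest one for the others. -/
noncomputable def slackExtension (r : ι → T → α) (i : ι) :
    T ⊕ ι → WithBot (WithTop α) :=
  open scoped Classical in
  Sum.elim (fun t ↦ ((r i t : WithTop α) : WithBot (WithTop α)))
    fun j ↦ if j = i then ⊥ else ((⊤ : WithTop α) : WithBot (WithTop α))

/-- The criteria `r i` refined lexicographically by an arbitrary enumeration of the points, which
makes them injective. -/
noncomputable def breakTies [Finite V] (r : ι → V → α) (i : ι) (v : V) :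
    α ×ₗ Fin (Nat.card V) :=
  toLex (r i v, Finite.equivFin V v)

lemma breakTies_injective [Finite V] (r : ι → V → α) (i : ι) : (breakTies r i).Injective :=
  fun _ _ h ↦ (Finite.equivFin V).injective (congrArg (fun p ↦ (ofLex p).2) h)

lemma IsDominantSet.of_breakTies [Finite V] [PartialOrder α] {r : ι → V → α} {S : Finset V}
    (hS : IsDominantSet (breakTies r) S) : IsDominantSet r S := fun y ↦
  (hS y).imp fun _ hi s hs ↦ Prod.Lex.monotone_fst _ _ (hi s hs)

lemma isSlackFamily_breakTies_slackExtension [Finite T] [Finite ι] [LinearOrder α]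
    (r : ι → T → α) : IsSlackFamily (breakTies (slackExtension r)) Sum.inr where
  apply_le i v := by
    rcases v with t | j
    · exact (Prod.Lex.toLex_lt_toLex.mpr <| .inl <| by simp [slackExtension]).le
    · rcases eq_or_ne j i with rfl | hji
      · exact le_rfl
      · exact (Prod.Lex.toLex_lt_toLex.mpr <| .inl <| by simp [slackExtension, hji]).le
  lt_apply i j hij v hv := by
    obtain ⟨t, rfl⟩ : ∃ t, v = Sum.inl t := by
      rcases v with t | k
      · exact ⟨t, rfl⟩
      · exact absurd ⟨k, rfl⟩ hv
    exact Prod.Lex.toLex_lt_toLex.mpr <| .inl <| by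
      simpa [slackExtension, hij.symm] using WithBot.coe_lt_coe.mpr (WithTop.coe_lt_top (r i t))

theorem exists_isDominantSet_subset_image [Finite ι] [Nonempty ι] [Finite T]
    [LinearOrder α] (r : ι → T → α) (c : T → ι) :
    ∃ (C : Finset ι) (S : Finset T), (C : Set ι) ⊆ c '' S ∧
      IsDominantSet (fun i : C ↦ r i) S := by
  classical
  have := Fintype.ofFinite ι
  obtain ⟨R, hdom, hR⟩ :=
    (isSlackFamily_breakTies_slackExtension r).exists_isDominantSet_surjOn
      (breakTies_injective _) (c := Sum.elim c id) fun _ ↦ rfl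
  refine ⟨Finset.univ \ R.toRight, R.toLeft, fun i hi ↦ ?_, fun y ↦ ?_⟩
  · obtain ⟨t | j, hv, hvi⟩ := hR (Set.mem_univ i)
    · exact ⟨t, by simpa using hv, hvi⟩
    · obtain rfl : j = i := hvi
      exact absurd hv (by simpa using hi)
  · obtain ⟨i, hi⟩ := hdom.of_breakTies (Sum.inl y)
    refine ⟨⟨i, ?_⟩, fun s hs ↦ ?_⟩
    · simp only [Finset.mem_sdiff, Finset.mem_univ, true_and, Finset.mem_toRight]
      exact fun hiR ↦ (hi _ hiR).not_gt (by simp [slackExtension])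
    · simpa [slackExtension] using hi _ (Finset.mem_toLeft.mp hs)

end ScarfLemma

section Simplex

variable {ι : Type*} [Fintype ι]

lemma exists_stdSimplex_forall_ge [Nonempty ι] {v : ι → ℝ} (hv : ∀ i, 0 ≤ v i)
    (hsum : ∑ i, v i ≤ 1) : ∃ y : stdSimplex ℝ ι, ∀ i, v i ≤ y i := by
  classical
  obtain ⟨i₀⟩ := ‹Nonempty ι›
  have hsingle : (0 : ι → ℝ) ≤ Pi.single i₀ (1 - ∑ j, v j) :=
    Pi.single_nonneg.mpr (sub_nonneg.mpr hsum)
  refine ⟨⟨v + Pi.single i₀ (1 - ∑ j, v j), fun i ↦ add_nonneg (hv i) (hsingle i), ?_⟩,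
    fun i ↦ le_add_of_nonneg_right (hsingle i)⟩
  simp [Finset.sum_add_distrib]

lemma stdSimplex_apply_le_add {b : ι → ℝ} {ε : ℝ} (hb : 1 - ε ≤ ∑ i, b i)
    {x : stdSimplex ℝ ι} (hx : ∀ i, b i ≤ x i) (i : ι) : x i ≤ b i + ε := by
  have hgap : x i - b i ≤ ∑ j, (x j - b j) :=
    Finset.single_le_sum (f := fun j ↦ x j - b j) (fun j _ ↦ sub_nonneg.mpr (hx j))
      (Finset.mem_univ i)
  rw [Finset.sum_sub_distrib, stdSimplex.sum_eq_one] at hgap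
  linarith

lemma stdSimplex_dist_le {b : ι → ℝ} {ε : ℝ} (hε : 0 ≤ ε) (hb : 1 - ε ≤ ∑ i, b i)
    {x z : stdSimplex ℝ ι} (hx : ∀ i, b i ≤ x i) (hz : ∀ i, b i ≤ z i) : dist x z ≤ ε := by
  refine (dist_pi_le_iff hε).mpr fun i ↦ ?_
  have hxi : x i ≤ b i + ε := stdSimplex_apply_le_add hb hx i
  have hzi : z i ≤ b i + ε := stdSimplex_apply_le_add hb hz i
  change |x i - z i| ≤ ε
  exact abs_sub_le_iff.mpr ⟨by linarith [hz i], by linarith [hx i]⟩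

variable [Nonempty ι]

lemma one_sub_card_mul_le_sum_of_net {net : Set (stdSimplex ℝ ι)} {b : ι → ℝ} {δ : ℝ}
    (hb : ∀ i, 0 ≤ b i) (hnet : ∀ y, ∃ t ∈ net, dist y t < δ)
    (hle : ∀ t ∈ net, ∃ i, t i ≤ b i) : 1 - Fintype.card ι * δ ≤ ∑ i, b i := by
  have hδ : 0 < δ := by
    obtain ⟨t, -, ht⟩ := hnet (Classical.arbitrary _)
    exact dist_nonneg.trans_lt ht
  by_contra! hlt
  obtain ⟨y, hy⟩ := exists_stdSimplex_forall_ge (v := fun i ↦ b i + δ)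
    (fun i ↦ add_nonneg (hb i) hδ.le) (by
      simp only [Finset.sum_add_distrib, Finset.sum_const, Finset.card_univ, nsmul_eq_mul]
      linarith)
  obtain ⟨t, ht, hyt⟩ := hnet y
  obtain ⟨i, hti⟩ := hle t ht
  have hyti : |y i - t i| < δ := (dist_le_pi_dist _ _ i).trans_lt hyt
  linarith [(abs_lt.mp hyti).2, hy i]

lemma exists_finset_stdSimplex_lowerBound (c : stdSimplex ℝ ι → ι) {ε : ℝ} (hε : 0 < ε) :
    ∃ (S : Finset (stdSimplex ℝ ι)) (b : ι → ℝ), S.Nonempty ∧ (∀ x ∈ S, ∀ i, b i ≤ x i) ∧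
      1 - ε ≤ ∑ i, b i ∧ ∀ i, b i = 0 ∨ ∃ z ∈ S, c z = i := by
  classical
  set δ := ε / Fintype.card ι with hδ_def
  have hδ : 0 < δ := by positivity
  obtain ⟨net, -, hfinite, hcover⟩ :=
    (isCompact_univ (X := stdSimplex ℝ ι)).finite_cover_balls hδ
  have := hfinite.to_subtype
  obtain ⟨C, S, hC, hdom⟩ := exists_isDominantSet_subset_image
    (fun i (t : net) ↦ (t : stdSimplex ℝ ι) i) (fun t ↦ c t)
  have exists_near (y : stdSimplex ℝ ι) : ∃ t ∈ net, dist y t < δ := by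
    simpa using hcover (Set.mem_univ y)
  have hS : S.Nonempty := by
    obtain ⟨t, ht, -⟩ := exists_near (Classical.arbitrary _)
    obtain ⟨i, -⟩ := hdom ⟨t, ht⟩
    obtain ⟨s, hs, -⟩ := hC i.2
    exact ⟨s, hs⟩
  let b (i : ι) : ℝ := if i ∈ C then S.inf' hS fun s ↦ (s : stdSimplex ℝ ι) i else 0
  have hb_nonneg (i : ι) : 0 ≤ b i := by
    by_cases hi : i ∈ C
    · simp [b, hi, stdSimplex.zero_le]
    · simp [b, hi]
  refine ⟨S.map (Function.Embedding.subtype _), b, hS.map, ?_, ?_, fun i ↦ ?_⟩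
  · simp only [Finset.forall_mem_map]
    intro s hs i
    by_cases hi : i ∈ C
    · exact (if_pos hi).trans_le (Finset.inf'_le (fun s : net ↦ (s : stdSimplex ℝ ι) i) hs)
    · simp [b, hi, stdSimplex.zero_le]
  · have hsum := one_sub_card_mul_le_sum_of_net hb_nonneg exists_near fun t ht ↦ by
      obtain ⟨⟨i, hi⟩, hti⟩ := hdom ⟨t, ht⟩
      exact ⟨i, by simpa [b, hi] using hti⟩
    rwa [hδ_def, mul_div_cancel₀ _ (by positivity)] at hsum
  · by_cases hi : i ∈ C
    · obtain ⟨s, hs, rfl⟩ := hC hi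
      exact .inr ⟨s, Finset.mem_map_of_mem _ hs, rfl⟩
    · exact .inl (if_neg hi)

lemma exists_stdSimplex_approx_mem {F : ι → Set (stdSimplex ℝ ι)} (hF : ⋃ i, F i = Set.univ)
    {ε : ℝ} (hε : 0 < ε) : ∃ x : stdSimplex ℝ ι, ∀ i, x i ≤ ε ∨ ∃ z ∈ F i, dist x z ≤ ε := by
  choose c hc using fun x ↦ Set.mem_iUnion.mp (hF ▸ Set.mem_univ x)
  obtain ⟨S, b, ⟨x, hx⟩, hle, hsum, hb⟩ := exists_finset_stdSimplex_lowerBound c hε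
  refine ⟨x, fun i ↦ (hb i).imp (fun hbi ↦ ?_) ?_⟩
  · simpa [hbi] using stdSimplex_apply_le_add hsum (hle x hx) i
  · rintro ⟨z, hz, rfl⟩
    exact ⟨z, hc z, stdSimplex_dist_le hε.le hsum (hle x hx) (hle z hz)⟩

theorem exists_stdSimplex_forall_mem_of_isClosed_cover {F : ι → Set (stdSimplex ℝ ι)}
    (hclosed : ∀ i, IsClosed (F i)) (hF : ⋃ i, F i = Set.univ)
    (hface : ∀ i (x : stdSimplex ℝ ι), x i = 0 → x ∈ F i) : ∃ x, ∀ i, x ∈ F i := by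
  choose x hx using fun n : ℕ ↦ exists_stdSimplex_approx_mem hF (Nat.one_div_pos_of_nat (n := n))
  obtain ⟨a, -, φ, hφ, ha⟩ := isCompact_univ.tendsto_subseq fun n ↦ Set.mem_univ (x n)
  have hzero := tendsto_one_div_add_atTop_nhds_zero_nat (𝕜 := ℝ) |>.comp hφ.tendsto_atTop
  refine ⟨a, fun i ↦ ?_⟩
  obtain hai | hai := (stdSimplex.zero_le a i).eq_or_lt
  · exact hface i a hai.symm
  rw [← (hclosed i).closure_eq, Metric.mem_closure_iff]
  intro ε hε
  have hcoord : Filter.Tendsto (fun n ↦ x (φ n) i) Filter.atTop (nhds (a i)) :=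
    ((continuous_apply i).comp continuous_subtype_val).continuousAt.tendsto.comp ha
  obtain ⟨n, hn_coord, hn_small, hn_near⟩ := ((hzero.eventually_lt hcoord hai).and <|
    (hzero.eventually_lt_const (half_pos hε)).and <|
    Metric.tendsto_nhds.mp ha _ (half_pos hε)).exists
  obtain ⟨z, hz, hxz⟩ := (hx (φ n) i).resolve_left hn_coord.not_ge
  refine ⟨z, hz, ?_⟩
  calc dist a z ≤ dist (x (φ n)) a + dist (x (φ n)) z := dist_triangle_left ..
    _ < ε / 2 + ε / 2 := add_lt_add hn_near (hxz.trans_lt hn_small)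
    _ = ε := add_halves ε

lemma mul_posPart_self {α : Type*} [Ring α] [LinearOrder α] (a : α) : a * a⁺ = a⁺ ^ 2 := by
  rcases le_total a 0 with h | h
  · simp [posPart_of_nonpos h]
  · simp [posPart_of_nonneg h, sq]

theorem exists_stdSimplex_forall_apply_nonpos {g : stdSimplex ℝ ι → ι → ℝ} (hg : Continuous g)
    (hsum : ∀ x : stdSimplex ℝ ι, ∑ j, x j * g x j ≤ 0) : ∃ x, ∀ j, g x j ≤ 0 := by
  let excess (x : stdSimplex ℝ ι) : ℝ := ∑ j, (g x j)⁺
  have hsum_excess (x : stdSimplex ℝ ι) : ∑ j, x j * excess x = ∑ j, (g x j)⁺ := by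
    rw [← Finset.sum_mul, stdSimplex.sum_eq_one, one_mul]
  have hcont (j : ι) : Continuous fun x ↦ (g x j)⁺ :=
    ((continuous_apply j).comp hg).sup continuous_const
  obtain ⟨x, hx⟩ := exists_stdSimplex_forall_mem_of_isClosed_cover
    -- where Nash's map `x ↦ (x + g⁺) / (1 + ∑ g⁺)` does not decrease the `i`-th coordinate
    (F := fun i ↦ {x | x i * excess x ≤ (g x i)⁺})
    (fun i ↦ isClosed_le (((continuous_apply i).comp continuous_subtype_val).mul
      (continuous_finsetSum _ fun j _ ↦ hcont j)) (hcont i))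
    (Set.eq_univ_of_forall fun x ↦ Set.mem_iUnion.mpr <| by
      simpa using Finset.exists_le_of_sum_le Finset.univ_nonempty (hsum_excess x).le)
    (fun i x hxi ↦ by simp [hxi, posPart_nonneg])
  have hx_eq (j : ι) : x j * excess x = (g x j)⁺ :=
    (Finset.sum_eq_sum_iff_of_le fun i _ ↦ hx i).mp (hsum_excess x) j (Finset.mem_univ j)
  have hsq : ∑ j, (g x j)⁺ ^ 2 ≤ 0 :=
    calc ∑ j, (g x j)⁺ ^ 2 = excess x * ∑ j, x j * g x j := by
          rw [Finset.mul_sum]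
          exact Finset.sum_congr rfl fun j _ ↦ by rw [← mul_posPart_self, ← hx_eq]; ring
      _ ≤ 0 := mul_nonpos_of_nonneg_of_nonpos
          (Finset.sum_nonneg fun j _ ↦ posPart_nonneg _) (hsum x)
  refine ⟨x, fun j ↦ posPart_eq_zero.mp <| sq_eq_zero_iff.mp ?_⟩
  exact (Finset.sum_eq_zero_iff_of_nonneg fun j _ ↦ sq_nonneg _).mp
    (hsq.antisymm (Finset.sum_nonneg fun j _ ↦ sq_nonneg _)) j (Finset.mem_univ j)

end Simplex

theorem exists_forall_apply_nonpos_of_compactSpace {K Q : Type*} [TopologicalSpace K]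
    [CompactSpace K] [Nonempty K] {φ : K → Q → ℝ} (hφ : ∀ q, Continuous fun a ↦ φ a q)
    (p : ∀ s : Finset Q, stdSimplex ℝ s → K) (hp : ∀ s, Continuous (p s))
    (hsum : ∀ (s : Finset Q) (x : stdSimplex ℝ s), ∑ q, x q * φ (p s x) q ≤ 0) :
    ∃ a, ∀ q, φ a q ≤ 0 := by
  obtain ⟨a, -, ha⟩ := isCompact_univ.inter_iInter_nonempty (fun q ↦ {a | φ a q ≤ 0})
    (fun q ↦ isClosed_le (hφ q) continuous_const) fun s ↦ by
      obtain rfl | hs := s.eq_empty_or_nonempty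
      · simp
      have := hs.to_subtype
      obtain ⟨x, hx⟩ := exists_stdSimplex_forall_apply_nonpos (g := fun x q ↦ φ (p s x) q)
        (continuous_pi fun q ↦ (hφ q).comp (hp s)) (hsum s)
      exact ⟨p s x, Set.mem_univ _, Set.mem_iInter₂.mpr fun q hq ↦ hx ⟨q, hq⟩⟩
  exact ⟨a, fun q ↦ Set.mem_iInter.mp ha q⟩

section ProductMeasure

variable {ι : Type*} [Fintype ι] [DecidableEq ι] {X : ι → Type*} [∀ j, MeasurableSpace (X j)]
  (ν : ∀ j, Measure (X j)) [∀ j, SigmaFinite (ν j)] (i : ι) [IsProbabilityMeasure (ν i)]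
  (τ : Measure (X i)) [SigmaFinite τ]

lemma pi_update_eq_map_prod :
    Measure.pi (Function.update ν i τ) =
      ((Measure.pi ν).prod τ).map fun p ↦ Function.update p.1 i p.2 := by
  have : ∀ j, SigmaFinite (Function.update ν i τ j) :=
    (Function.forall_update_iff ν fun _ m ↦ SigmaFinite m).mpr ⟨‹_›, fun _ _ ↦ inferInstance⟩
  refine Measure.pi_eq fun s hs ↦ ?_
  have hpreimage : (fun p : (∀ j, X j) × X i ↦ Function.update p.1 i p.2) ⁻¹' Set.univ.pi s =
      Set.univ.pi (Function.update s i Set.univ) ×ˢ s i := by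
    ext ⟨x, t⟩
    simp [Function.forall_update_iff x fun j y ↦ y ∈ s j,
      Function.forall_update_iff s fun j A ↦ x j ∈ A, and_comm]
  rw [Measure.map_apply measurable_update' (.univ_pi hs), hpreimage, Measure.prod_prod,
    Measure.pi_pi, ← Finset.prod_erase_mul _ _ (Finset.mem_univ i),
    ← Finset.prod_erase_mul _ (fun j ↦ Function.update ν i τ j (s j)) (Finset.mem_univ i)]
  simp only [Function.update_self, measure_univ, mul_one]
  congr 1
  refine Finset.prod_congr rfl fun j hj ↦ ?_
  simp only [Function.update_of_ne (Finset.ne_of_mem_erase hj)]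

lemma integral_pi_update {E : Type*} [NormedAddCommGroup E] [NormedSpace ℝ E]
    {f : (∀ j, X j) → E} (hf : Integrable f (Measure.pi (Function.update ν i τ))) :
    ∫ x, f x ∂Measure.pi (Function.update ν i τ) =
      ∫ t, ∫ x, f (Function.update x i t) ∂Measure.pi ν ∂τ := by
  rw [pi_update_eq_map_prod] at hf ⊢
  rw [integral_map measurable_update'.aemeasurable hf.aestronglyMeasurable]
  exact integral_prod_symm _ (hf.comp_measurable measurable_update')

end ProductMeasure

section DiracMixture

variable {ι Y : Type*} [Fintype ι] [MeasurableSpace Y] (q : ι → Y)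

/-- The probability measure that gives the point `q l` the weight `x l`: the mixed strategy that
randomises over the pure strategies `q l`. -/
noncomputable def diracMixture (x : stdSimplex ℝ ι) : ProbabilityMeasure Y :=
  ⟨∑ l, ENNReal.ofReal (x l) • Measure.dirac (q l), ⟨by
    simp [← ENNReal.ofReal_sum_of_nonneg fun l _ ↦ stdSimplex.zero_le x l]⟩⟩

lemma integral_diracMixture [MeasurableSingletonClass Y] (x : stdSimplex ℝ ι) (f : Y → ℝ) :
    ∫ y, f y ∂(diracMixture q x : Measure Y) = ∑ l, x l * f (q l) := by
  rw [diracMixture, ProbabilityMeasure.coe_mk, integral_finsetSum_measure]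
  · simp [integral_smul_measure, stdSimplex.zero_le]
  · exact fun l _ ↦ (integrable_dirac (by simp)).smul_measure ENNReal.ofReal_ne_top

lemma continuous_diracMixture [TopologicalSpace Y] [T1Space Y] [BorelSpace Y] :
    Continuous (diracMixture q) := by
  refine ProbabilityMeasure.continuous_iff_forall_continuous_integral.mpr fun f ↦ ?_
  simp only [integral_diracMixture]
  exact continuous_finsetSum _ fun l _ ↦
    ((continuous_apply l).comp continuous_subtype_val).mul continuous_const

end DiracMixture

section Game

variable {ι : Type*} [Fintype ι] {X : ι → Type*} [∀ j, MeasurableSpace (X j)]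

/-- The expected payoff `u` when the players independently draw their actions from `ν`. -/
noncomputable def expectedPayoff (u : (∀ j, X j) → ℝ) (ν : ∀ j, ProbabilityMeasure (X j)) : ℝ :=
  ∫ x, u x ∂Measure.pi fun j ↦ (ν j : Measure (X j))

lemma continuous_expectedPayoff [∀ j, TopologicalSpace (X j)] [∀ j, CompactSpace (X j)]
    [∀ j, T2Space (X j)] [∀ j, SecondCountableTopology (X j)] [∀ j, BorelSpace (X j)]
    {u : (∀ j, X j) → ℝ} (hu : Continuous u) : Continuous (expectedPayoff u) := by
  have := fun j ↦ TopologicalSpace.metrizableSpace_of_t3_secondCountable (X j)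
  exact (ProbabilityMeasure.continuous_integral_boundedContinuousFunction
    (.mkOfCompact ⟨u, hu⟩)).comp (ProbabilityMeasure.continuous_pi (α := X))

variable [DecidableEq ι]

/-- The expected payoff `u` when player `i` plays the pure action `t` and the others follow `ν`. -/
noncomputable def deviationPayoff (u : (∀ j, X j) → ℝ) (ν : ∀ j, ProbabilityMeasure (X j))
    (i : ι) (t : X i) : ℝ :=
  expectedPayoff (fun x ↦ u (Function.update x i t)) ν

/-- Mixed Nash equilibrium of the game with payoffs `u i`; it suffices to quantify over pure
deviations because an expected payoff is an average of pure ones. -/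
def IsMixedNash (u : ι → (∀ j, X j) → ℝ) (ν : ∀ j, ProbabilityMeasure (X j)) : Prop :=
  ∀ i t, deviationPayoff (u i) ν i t ≤ expectedPayoff (u i) ν

/-- The Nikaido–Isoda function: the sum over players of the gain from deviating to `q i`. -/
noncomputable def nikaidoIsoda (u : ι → (∀ j, X j) → ℝ) (ν : ∀ j, ProbabilityMeasure (X j))
    (q : ∀ j, X j) : ℝ :=
  ∑ i, (deviationPayoff (u i) ν i (q i) - expectedPayoff (u i) ν)

variable [∀ j, TopologicalSpace (X j)] [∀ j, CompactSpace (X j)] [∀ j, T2Space (X j)]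
  [∀ j, SecondCountableTopology (X j)] [∀ j, BorelSpace (X j)]

lemma continuous_deviationPayoff_left {u : (∀ j, X j) → ℝ} (hu : Continuous u) {i : ι} (t : X i) :
    Continuous fun ν ↦ deviationPayoff u ν i t :=
  continuous_expectedPayoff (hu.comp (continuous_id.update i continuous_const))

lemma continuous_deviationPayoff {u : (∀ j, X j) → ℝ} (hu : Continuous u)
    (ν : ∀ j, ProbabilityMeasure (X j)) (i : ι) : Continuous (deviationPayoff u ν i) := by
  simpa using! continuous_parametric_integral_of_continuous
    (μ := Measure.pi fun j ↦ (ν j : Measure (X j)))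
    (f := fun (t : X i) x ↦ u (Function.update x i t))
    (hu.comp (continuous_snd.update i continuous_fst)) isCompact_univ

lemma integrable_deviationPayoff {u : (∀ j, X j) → ℝ} (hu : Continuous u)
    (ν : ∀ j, ProbabilityMeasure (X j)) (i : ι) (τ : Measure (X i)) [IsFiniteMeasure τ] :
    Integrable (deviationPayoff u ν i) τ :=
  (continuous_deviationPayoff hu ν i).integrable_of_hasCompactSupport (.of_compactSpace _)

lemma integral_pi_update_eq_integral_deviationPayoff {u : (∀ j, X j) → ℝ} (hu : Continuous u)
    (ν : ∀ j, ProbabilityMeasure (X j)) (i : ι) (τ : Measure (X i)) [IsProbabilityMeasure τ] :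
    ∫ x, u x ∂Measure.pi (Function.update (fun j ↦ (ν j : Measure (X j))) i τ) =
      ∫ t, deviationPayoff u ν i t ∂τ := by
  have : ∀ j, IsProbabilityMeasure (Function.update (fun j ↦ (ν j : Measure (X j))) i τ j) :=
    (Function.forall_update_iff _ fun _ m ↦ IsProbabilityMeasure m).mpr
      ⟨‹_›, fun _ _ ↦ inferInstance⟩
  exact integral_pi_update _ i τ
    (hu.integrable_of_hasCompactSupport (HasCompactSupport.of_compactSpace u))

lemma integral_deviationPayoff {u : (∀ j, X j) → ℝ} (hu : Continuous u)
    (ν : ∀ j, ProbabilityMeasure (X j)) (i : ι) :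
    ∫ t, deviationPayoff u ν i t ∂(ν i : Measure (X i)) = expectedPayoff u ν := by
  rw [← integral_pi_update_eq_integral_deviationPayoff hu, Function.update_eq_self, expectedPayoff]

variable {u : ι → (∀ j, X j) → ℝ}

lemma continuous_nikaidoIsoda (hu : ∀ i, Continuous (u i)) (q : ∀ j, X j) :
    Continuous fun ν ↦ nikaidoIsoda u ν q :=
  continuous_finsetSum _ fun i _ ↦
    (continuous_deviationPayoff_left (hu i) (q i)).sub (continuous_expectedPayoff (hu i))

lemma sum_mul_nikaidoIsoda_diracMixture {σ : Type*} [Fintype σ] (hu : ∀ i, Continuous (u i))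
    (q : σ → ∀ j, X j) (x : stdSimplex ℝ σ) :
    ∑ l, x l * nikaidoIsoda u (fun j ↦ diracMixture (fun l ↦ q l j) x) (q l) = 0 := by
  simp only [nikaidoIsoda, Finset.mul_sum]
  rw [Finset.sum_comm]
  refine Finset.sum_eq_zero fun i _ ↦ ?_
  simp only [mul_sub, Finset.sum_sub_distrib, ← Finset.sum_mul, stdSimplex.sum_eq_one, one_mul]
  rw [← integral_deviationPayoff (hu i) _ i, integral_diracMixture, sub_self]

lemma isMixedNash_of_nikaidoIsoda_nonpos (hu : ∀ i, Continuous (u i))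
    {ν : ∀ j, ProbabilityMeasure (X j)} (hν : ∀ q, nikaidoIsoda u ν q ≤ 0) : IsMixedNash u ν := by
  intro i t
  have exists_ge (j : ι) : ∃ y, expectedPayoff (u j) ν ≤ deviationPayoff (u j) ν j y := by
    rw [← integral_deviationPayoff (hu j) ν j]
    exact exists_integral_le (integrable_deviationPayoff (hu j) ν j _)
  choose y hy using exists_ge
  have hsum := hν (Function.update y i t)
  rw [nikaidoIsoda, ← Finset.add_sum_erase _ _ (Finset.mem_univ i), Function.update_self] at hsum
  have hrest : 0 ≤ ∑ j ∈ Finset.univ.erase i,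
      (deviationPayoff (u j) ν j (Function.update y i t j) - expectedPayoff (u j) ν) := by
    refine Finset.sum_nonneg fun j hj ↦ ?_
    rw [Function.update_of_ne (Finset.ne_of_mem_erase hj)]
    exact sub_nonneg.mpr (hy j)
  linarith

theorem exists_isMixedNash [∀ j, Nonempty (X j)] (hu : ∀ i, Continuous (u i)) :
    ∃ ν, IsMixedNash u ν := by
  have (j : ι) : Nonempty (ProbabilityMeasure (X j)) := ⟨diracProba (Classical.arbitrary _)⟩
  obtain ⟨ν, hν⟩ := exists_forall_apply_nonpos_of_compactSpace (continuous_nikaidoIsoda hu)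
    (fun s x j ↦ diracMixture (fun q : s ↦ (q : ∀ j, X j) j) x)
    (fun s ↦ continuous_pi fun j ↦ continuous_diracMixture _)
    (fun s x ↦ (sum_mul_nikaidoIsoda_diracMixture hu (fun q : s ↦ (q : ∀ j, X j)) x).le)
  exact ⟨ν, isMixedNash_of_nikaidoIsoda_nonpos hu hν⟩

lemma IsMixedNash.integral_deviationPayoff_le (hu : ∀ i, Continuous (u i))
    {ν : ∀ j, ProbabilityMeasure (X j)} (hν : IsMixedNash u ν) (i : ι) (τ : Measure (X i))
    [IsProbabilityMeasure τ] : ∫ t, deviationPayoff (u i) ν i t ∂τ ≤ expectedPayoff (u i) ν :=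
  calc ∫ t, deviationPayoff (u i) ν i t ∂τ ≤ ∫ _, expectedPayoff (u i) ν ∂τ :=
        integral_mono (integrable_deviationPayoff (hu i) ν i τ) (integrable_const _) (hν i)
    _ = expectedPayoff (u i) ν := by simp

end Game

lemma integrable_integral_kernel {A Y : Type*} [MeasurableSpace A] [MeasurableSpace Y]
    [TopologicalSpace Y] [CompactSpace Y] [OpensMeasurableSpace Y] {f : Y → ℝ} (hf : Continuous f)
    (κ : Kernel A Y) [IsMarkovKernel κ] (μ : Measure A) [IsFiniteMeasure μ] :
    Integrable (fun a ↦ ∫ y, f y ∂κ a) μ := by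
  obtain ⟨C, hC⟩ := isCompact_univ.exists_bound_of_continuousOn hf.continuousOn
  refine .of_bound hf.stronglyMeasurable.integral_kernel.aestronglyMeasurable C
    (.of_forall fun a ↦ ?_)
  simpa using norm_integral_le_of_norm_le_const (μ := κ a)
    (.of_forall fun y ↦ hC y (Set.mem_univ y))

theorem bne_exists_observable_preferences_general {ι : Type*} [Fintype ι] [DecidableEq ι]
    {O X : ι → Type*} [∀ i, MeasurableSpace (O i)]
    [∀ i, TopologicalSpace (X i)] [∀ i, CompactSpace (X i)] [∀ i, T2Space (X i)]
    [∀ i, SecondCountableTopology (X i)] [∀ i, Nonempty (X i)]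
    [∀ i, MeasurableSpace (X i)] [∀ i, BorelSpace (X i)]
    (μ : Measure (∀ i, O i)) [IsFiniteMeasure μ]
    {u : ι → (∀ j, X j) → ℝ} (hu : ∀ i, Continuous (u i)) :
    ∃ κ : ∀ j, Kernel (O j) (X j), (∀ j, IsMarkovKernel (κ j)) ∧
      ∀ i (τ : Kernel (O i) (X i)), IsMarkovKernel τ →
        ∫ o, ∫ x, u i x ∂Measure.pi (fun j ↦ Function.update κ i τ j (o j)) ∂μ ≤
          ∫ o, ∫ x, u i x ∂Measure.pi (fun j ↦ κ j (o j)) ∂μ := by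
  obtain ⟨ν, hν⟩ := exists_isMixedNash hu
  refine ⟨fun j ↦ Kernel.const (O j) (ν j : Measure (X j)), fun j ↦ inferInstance, fun i τ _ ↦ ?_⟩
  have hdeviation (o : ∀ j, O j) :
      ∫ x, u i x ∂Measure.pi (fun j ↦
        Function.update (fun j ↦ Kernel.const (O j) (ν j : Measure (X j))) i τ j (o j)) =
      ∫ t, deviationPayoff (u i) ν i t ∂τ (o i) := by
    rw [← integral_pi_update_eq_integral_deviationPayoff (hu i)]
    congr 2 with j
    obtain rfl | hj := eq_or_ne j i <;> simp [*]
  simp only [hdeviation, Kernel.const_apply]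
  exact integral_mono
    (integrable_integral_kernel (continuous_deviationPayoff (hu i) ν i)
      (τ.comap (fun o : ∀ j, O j ↦ o i) (measurable_pi_apply i)) μ)
    (integrable_const _) fun o ↦ hν.integral_deviationPayoff_le hu i (τ (o i))

/-- **Theorem 2 (BNE attainability with observable uniform preferences), ex-ante form.**
With commonly observed fixed preference vectors `w i`, continuous vectorised rewards `f i`,
and a common prior `μ` over observation profiles, there exists a profile of behavioral
strategies (Markov kernels) `κ*` such that no agent can improve its ex-ante payoff by
unilaterally deviating to any other Markov kernel. -/
theorem bne_exists_observable_preferences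
    (N k : ℕ) (hN : 1 ≤ N) (hk : 1 ≤ k)
    (O : Fin N → Type*) (X : Fin N → Type*)
    [∀ i, MetricSpace (O i)] [∀ i, CompactSpace (O i)] [∀ i, Nonempty (O i)]
    [∀ i, MeasurableSpace (O i)] [∀ i, BorelSpace (O i)]
    [∀ i, MetricSpace (X i)] [∀ i, CompactSpace (X i)] [∀ i, Nonempty (X i)]
    [∀ i, MeasurableSpace (X i)] [∀ i, BorelSpace (X i)]
    (μ : Measure (Π i, O i)) [IsProbabilityMeasure μ]
    (w : Π _ : Fin N, stdSimplex ℝ (Fin k))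
    (f : Π _ : Fin N, (Π j, X j) → (Fin k → ℝ))
    (hf : ∀ i, Continuous (f i))
    (J : Fin N → (Π j, Kernel (O j) (X j)) → ℝ)
    (hJ : ∀ i κ, J i κ =
      ∫ o, (∫ x, (∑ m, (w i : Fin k → ℝ) m * f i x m)
        ∂(Measure.pi (fun j => κ j (o j)))) ∂μ) :
    ∃ κstar : Π j, Kernel (O j) (X j),
      (∀ j, IsMarkovKernel (κstar j)) ∧
      ∀ i (τ : Kernel (O i) (X i)), IsMarkovKernel τ →
        J i (Function.update κstar i τ) ≤ J i κstar := by
  simpa only [hJ] using bne_exists_observable_preferences_general μ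
    (u := fun i x ↦ ∑ m, (w i : Fin k → ℝ) m * f i x m) fun i ↦ by fun_prop
end

section
/- Let ι be a finite type and for each i ∈ ι let X i be a nonempty compact metric space with its Borel σ-algebra, and let f : (Π i, X i) → ℝ be continuous. Then the map from Π i, ProbabilityMeasure (X i) (with the product of the weak convergence topologies) to ℝ given by μ ↦ ∫ x, f x ∂(Measure.pi (fun i => ↑(μ i))) is continuous. -/
open MeasureTheory

theorem continuous_integral_pi_probabilityMeasure_general
    {ι : Type*} [Fintype ι] {X : ι → Type*} [∀ i, TopologicalSpace (X i)]
    [∀ i, SecondCountableTopology (X i)] [∀ i, TopologicalSpace.PseudoMetrizableSpace (X i)]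
    [∀ i, MeasurableSpace (X i)] [∀ i, OpensMeasurableSpace (X i)]
    (f : BoundedContinuousFunction (Π i, X i) ℝ) :
    Continuous (fun μ : Π i, ProbabilityMeasure (X i) =>
      ∫ x, f x ∂(Measure.pi (fun i => (μ i : Measure (X i))))) :=
  (ProbabilityMeasure.continuous_integral_boundedContinuousFunction f).comp
    ProbabilityMeasure.continuous_pi

/-- **Joint continuity of the mixed extension.**
For a finite family of nonempty compact metric spaces and a continuous function `f` on
their product, the expected value of `f` under the product of probability measures is
jointly continuous in the profile of measures (each `ProbabilityMeasure (X i)` carrying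
the topology of weak convergence). -/
theorem continuous_integral_pi_probabilityMeasure
    (ι : Type*) [Fintype ι] (X : ι → Type*)
    [∀ i, MetricSpace (X i)] [∀ i, CompactSpace (X i)] [∀ i, Nonempty (X i)]
    [∀ i, MeasurableSpace (X i)] [∀ i, BorelSpace (X i)]
    (f : (Π i, X i) → ℝ) (hf : Continuous f) :
    Continuous (fun μ : Π i, ProbabilityMeasure (X i) =>
      ∫ x, f x ∂(Measure.pi (fun i => (μ i : Measure (X i))))) :=
  continuous_integral_pi_probabilityMeasure_general
    (BoundedContinuousFunction.mkOfCompact ⟨f, hf⟩)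
end
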